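/- Let G = (V, ℰ) be an undirected graph on V = {1, …, d}, let Γ̄ be a symmetric d×d real matrix with zero diagonal, and suppose Q̂ ∈ 𝒬 satisfies Q̂_{ij} = 0 for all {i,j} ∉ ℰ and Γ(Q̂)_{ij} = Γ̄_{ij} for all {i,j} ∈ ℰ. Then Q̂ is the unique maximizer of the surrogate log-likelihood ℓ(Q; Γ̄) = (1/2) log τ(Q) − (1/2)⟨Γ̄, Q⟩ over the set {Q ∈ 𝒬 : Q_{ij} = 0 for all {i,j} ∉ ℰ}. -/

import Mathlib

open Matrix Finset

/-- `Θ(Q)`: `Θ(Q)_{ij} = −Q_{ij}` for `i ≠ j` and `Θ(Q)_{ii} = ∑_{j≠i} Q_{ij}`. -/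
noncomputable def thetaOf {d : ℕ} (Q : Matrix (Fin d) (Fin d) ℝ) :
    Matrix (Fin d) (Fin d) ℝ :=
  Matrix.of fun i j => if i = j then ∑ l ∈ univ.filter (fun l => l ≠ i), Q i l else -Q i j

/-- Membership in `𝒬`: symmetric, zero diagonal, and `xᵀΘ(Q)x > 0` for every nonzero
`x` with `∑ᵢ xᵢ = 0`. -/
def memQ {d : ℕ} (Q : Matrix (Fin d) (Fin d) ℝ) : Prop :=
  Q.IsSymm ∧ (∀ i, Q i i = 0) ∧
    ∀ x : Fin d → ℝ, x ≠ 0 → (∑ i, x i) = 0 → 0 < x ⬝ᵥ (thetaOf Q).mulVec x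

/-- The centering matrix `P = I − (1/d)𝟙𝟙ᵀ`. -/
noncomputable def Pmat (d : ℕ) : Matrix (Fin d) (Fin d) ℝ :=
  1 - ((d : ℝ)⁻¹) • Matrix.of (fun _ _ : Fin d => (1 : ℝ))

/-- `S` is the matrix `Σ(Q)`: the unique symmetric matrix with `Σ(Q)𝟙 = 0` and
`Θ(Q)Σ(Q) = P`. -/
def isSigmaOf {d : ℕ} (Q S : Matrix (Fin d) (Fin d) ℝ) : Prop :=
  S.IsSymm ∧ S.mulVec (fun _ => 1) = 0 ∧ thetaOf Q * S = Pmat d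

/-- The variogram associated with `Σ`: `Γ_{ij} = Σ_{ii} + Σ_{jj} − 2Σ_{ij}`. -/
noncomputable def gammaOf {d : ℕ} (S : Matrix (Fin d) (Fin d) ℝ) :
    Matrix (Fin d) (Fin d) ℝ :=
  Matrix.of fun i j => S i i + S j j - 2 * S i j

/-- The inner product `⟨A, B⟩ = ∑_{i<j} A_{ij} B_{ij}` on symmetric matrices with
zero diagonal. -/
noncomputable def sinner {d : ℕ} (A B : Matrix (Fin d) (Fin d) ℝ) : ℝ :=
  ∑ p ∈ univ.filter (fun p : Fin d × Fin d => p.1 < p.2), A p.1 p.2 * B p.1 p.2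

open Classical in
/-- The spanning tree polynomial `τ(Q) = ∑_T ∏_{{i,j}∈T} Q_{ij}`, summed over all
spanning trees of the complete graph on `{1, …, d}`. -/
noncomputable def tau {d : ℕ} (Q : Matrix (Fin d) (Fin d) ℝ) : ℝ :=
  ∑ T ∈ (univ : Finset (SimpleGraph (Fin d))).filter (fun T => T.IsTree),
    ∏ p ∈ univ.filter (fun p : Fin d × Fin d => p.1 < p.2 ∧ T.Adj p.1 p.2), Q p.1 p.2

/-- The Cayley–Menger matrix of `Γ`. -/
noncomputable def CM {d : ℕ} (Γ : Matrix (Fin d) (Fin d) ℝ) :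
    Matrix (Fin (d + 1)) (Fin (d + 1)) ℝ :=
  Matrix.of fun a b =>
    if ha : (a : ℕ) < d then
      (if hb : (b : ℕ) < d then -Γ ⟨a, ha⟩ ⟨b, hb⟩ / 2 else 1)
    else (if (b : ℕ) < d then -1 else 0)

/-- Membership in the cone `𝒞^d` of symmetric matrices with zero diagonal that are
strictly conditionally negative definite. -/
def memC {d : ℕ} (Γ : Matrix (Fin d) (Fin d) ℝ) : Prop :=
  Γ.IsSymm ∧ (∀ i, Γ i i = 0) ∧
    ∀ x : Fin d → ℝ, x ≠ 0 → (∑ i, x i) = 0 → x ⬝ᵥ Γ.mulVec x < 0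

/-- extend a parent function by fixing the root `0`. -/
def ext0 {n : ℕ} (f : Fin n → Fin (n+1)) : Fin (n+1) → Fin (n+1) := Fin.cases 0 f

@[simp] lemma ext0_zero {n : ℕ} (f : Fin n → Fin (n+1)) : ext0 f 0 = 0 := rfl
@[simp] lemma ext0_succ {n : ℕ} (f : Fin n → Fin (n+1)) (i : Fin n) : ext0 f i.succ = f i := rfl

def GoodF {n : ℕ} (f : Fin n → Fin (n+1)) : Prop := ∀ v, ∃ k, (ext0 f)^[k] v = 0

lemma GoodF.depth {n : ℕ} {f : Fin n → Fin (n+1)} (hf : GoodF f) :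
    ∃ h : Fin (n+1) → ℕ, ∀ v, v ≠ 0 → h (ext0 f v) < h v := by
  classical
  refine ⟨fun v => Nat.find (hf v), fun v hv => ?_⟩
  have h1 := Nat.find_spec (hf v)
  rcases hk : Nat.find (hf v) with _ | k
  · rw [hk] at h1; exact absurd h1 hv
  · rw [hk, Function.iterate_succ_apply] at h1
    show Nat.find _ < Nat.find _
    rw [hk]
    exact Nat.lt_succ_of_le (Nat.find_min' (hf (ext0 f v)) h1)

lemma GoodF.of_depth {n : ℕ} {f : Fin n → Fin (n+1)} (h : Fin (n+1) → ℕ)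
    (hh : ∀ v, v ≠ 0 → h (ext0 f v) < h v) : GoodF f := by
  intro v
  induction hm : h v using Nat.strong_induction_on generalizing v with
  | _ m ih =>
    by_cases hv : v = 0
    · exact ⟨0, hv⟩
    · obtain ⟨k, hk⟩ := ih _ (hm ▸ hh v hv) _ rfl
      exact ⟨k+1, hk⟩

/-- row vectors of the incidence type matrix -/
def incM {n : ℕ} (f : Fin n → Fin (n+1)) : Matrix (Fin n) (Fin n) ℝ :=
  Matrix.of fun i j => (if i = j then 1 else 0) - (if f i = j.succ then 1 else 0)

lemma det_incM_good {n : ℕ} {f : Fin n → Fin (n+1)} (hf : GoodF f) : (incM f).det = 1 := by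
  classical
  obtain ⟨h, hh⟩ := hf.depth
  have key : ∀ i j : Fin n, h i.succ ≤ h j.succ → incM f i j = if i = j then 1 else 0 := by
    intro i j hij
    have : f i ≠ j.succ := by
      intro e
      have := hh i.succ (Fin.succ_ne_zero i)
      rw [ext0_succ, e] at this
      omega
    simp [incM, this]
  have hb : BlockTriangular (incM f) (fun i : Fin n => OrderDual.toDual (h i.succ)) := by
    intro i j hij
    have hij' : h i.succ < h j.succ := hij
    rw [key i j hij'.le, if_neg]
    rintro rfl; omega
  rw [hb.det]
  apply Finset.prod_eq_one
  intro a _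
  have : (incM f).toSquareBlock (fun i : Fin n => OrderDual.toDual (h i.succ)) a = 1 := by
    ext ⟨i, hi⟩ ⟨j, hj⟩
    have e : h i.succ = h j.succ := OrderDual.toDual.injective (hi.trans hj.symm)
    simp only [toSquareBlock_def, of_apply, Matrix.one_apply, Subtype.mk.injEq]
    exact key i j e.le
  rw [this, det_one]

lemma det_incM_bad {n : ℕ} {f : Fin n → Fin (n+1)} (hf : ¬ GoodF f) : (incM f).det = 0 := by
  classical
  rw [← Matrix.exists_mulVec_eq_zero_iff]
  let y : Fin (n+1) → ℝ := fun v => if ∃ k, (ext0 f)^[k] v = 0 then 0 else 1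
  have y0 : y 0 = 0 := if_pos ⟨0, rfl⟩
  have yf : ∀ v, y (ext0 f v) = y v := by
    intro v
    have : (∃ k, (ext0 f)^[k] (ext0 f v) = 0) ↔ (∃ k, (ext0 f)^[k] v = 0) := by
      constructor
      · rintro ⟨k, hk⟩; exact ⟨k+1, hk⟩
      · rintro ⟨k, hk⟩
        refine ⟨k, ?_⟩
        rw [← Function.iterate_succ_apply, Function.iterate_succ_apply', hk]; rfl
    simp only [y, this]
  refine ⟨fun i => y i.succ, ?_, ?_⟩
  · intro e
    apply hf
    intro v
    by_contra hv
    have h1 : y v = 1 := if_neg hv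
    induction v using Fin.cases with
    | zero => rw [y0] at h1; norm_num at h1
    | succ i => have := congrFun e i; simp only [Pi.zero_apply] at this; rw [h1] at this; norm_num at this
  · ext i
    have h1 : ∑ j : Fin n, (if f i = j.succ then 1 else 0) * y j.succ = y (f i) := by
      have := Fin.sum_univ_succ (fun v => (if f i = v then (1:ℝ) else 0) * y v)
      simp only [y0, mul_zero, zero_add] at this
      rw [← this]; simp
    simp only [mulVec, dotProduct, incM, of_apply, sub_mul, Finset.sum_sub_distrib, h1, Pi.zero_apply]
    have := yf i.succ
    rw [ext0_succ] at this
    simp [this]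

/-- tree of a parent function -/
def treeOf {n : ℕ} (f : Fin n → Fin (n+1)) : SimpleGraph (Fin (n+1)) :=
  SimpleGraph.fromRel fun a b => ext0 f a = b

lemma GoodF.ne {n : ℕ} {f : Fin n → Fin (n+1)} (hf : GoodF f) {v : Fin (n+1)} (hv : v ≠ 0) :
    ext0 f v ≠ v := by
  obtain ⟨h, hh⟩ := hf.depth
  intro e
  have := hh v hv
  rw [e] at this; omega

lemma GoodF.ne2 {n : ℕ} {f : Fin n → Fin (n+1)} (hf : GoodF f) {v : Fin (n+1)} (hv : v ≠ 0) :
    ext0 f (ext0 f v) ≠ v := by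
  obtain ⟨h, hh⟩ := hf.depth
  intro e
  have h1 := hh v hv
  by_cases h0 : ext0 f v = 0
  · rw [h0] at e; exact hv e.symm
  have h2 := hh _ h0
  rw [e] at h2; omega

lemma treeOf_adj {n : ℕ} {f : Fin n → Fin (n+1)} (hf : GoodF f) {v : Fin (n+1)} (hv : v ≠ 0) :
    (treeOf f).Adj v (ext0 f v) := by
  simp [treeOf, (hf.ne hv).symm]

lemma treeOf_adj_cases {n : ℕ} {f : Fin n → Fin (n+1)} {v w : Fin (n+1)} (h : (treeOf f).Adj v w) :
    ext0 f v = w ∨ ext0 f w = v := by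
  simp only [treeOf, SimpleGraph.fromRel_adj] at h; exact h.2

lemma treeOf_connected {n : ℕ} {f : Fin n → Fin (n+1)} (hf : GoodF f) : (treeOf f).Connected := by
  obtain ⟨h, hh⟩ := hf.depth
  have key : ∀ v, (treeOf f).Reachable v 0 := by
    intro v
    induction hm : h v using Nat.strong_induction_on generalizing v with
    | _ m ih =>
      by_cases hv : v = 0
      · rw [hv]
      · exact (treeOf_adj hf hv).reachable.trans (ih _ (hm ▸ hh v hv) _ rfl)
  exact ⟨fun v w => (key v).trans (key w).symm⟩

lemma treeOf_injective {n : ℕ} {f g : Fin n → Fin (n+1)} (hf : GoodF f)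
    (h : treeOf f = treeOf g) : f = g := by
  have edge : ∀ v, v ≠ 0 → ext0 g v = ext0 f v ∨ ext0 g (ext0 f v) = v := by
    intro v hv
    exact treeOf_adj_cases (h ▸ treeOf_adj hf hv)
  obtain ⟨r, hr⟩ := hf.depth
  have key : ∀ v, v ≠ 0 → ext0 g (ext0 f v) ≠ v := by
    intro v hv
    induction hm : r v using Nat.strong_induction_on generalizing v with
    | _ m ih =>
      by_cases h0 : ext0 f v = 0
      · rw [h0]; exact hv.symm
      · have h1 := ih _ (hm ▸ hr v hv) _ h0 rfl
        have h2 := (edge _ h0).resolve_right h1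
        rw [h2]; exact hf.ne2 hv
  ext1 i
  exact ((edge i.succ (Fin.succ_ne_zero i)).resolve_right (key _ (Fin.succ_ne_zero i))).symm

lemma parentEdge_inj {n : ℕ} {f : Fin n → Fin (n+1)} (hf : GoodF f) :
    Function.Injective fun i : Fin n => s(i.succ, f i) := by
  intro i j hij
  simp only [Sym2.eq_iff] at hij
  rcases hij with ⟨h, _⟩ | ⟨h1, h2⟩
  · exact Fin.succ_injective _ h
  · exfalso
    apply hf.ne2 (Fin.succ_ne_zero i)
    rw [ext0_succ, h2, ext0_succ, h1]

lemma treeOf_edgeSet {n : ℕ} {f : Fin n → Fin (n+1)} (hf : GoodF f) :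
    (treeOf f).edgeSet = Set.range fun i : Fin n => s(i.succ, f i) := by
  ext e
  induction e using Sym2.ind with
  | _ a b =>
    simp only [SimpleGraph.mem_edgeSet, Set.mem_range]
    constructor
    · intro h
      have key : ∀ a b : Fin (n+1), a ≠ b → ext0 f a = b → ∃ i : Fin n, s(i.succ, f i) = s(a, b) := by
        intro a b hab h
        induction a using Fin.cases with
        | zero => exact absurd h hab
        | succ i => exact ⟨i, by rw [← h]; rfl⟩
      rcases treeOf_adj_cases h with h' | h'
      · exact key a b h.ne h'
      · rw [Sym2.eq_swap]; exact key b a h.ne' h'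
    · rintro ⟨i, hi⟩
      rw [← SimpleGraph.mem_edgeSet, ← hi, SimpleGraph.mem_edgeSet]
      exact treeOf_adj hf (Fin.succ_ne_zero i)

lemma treeOf_isTree {n : ℕ} {f : Fin n → Fin (n+1)} (hf : GoodF f) : (treeOf f).IsTree := by
  rw [SimpleGraph.isTree_iff_connected_and_card]
  refine ⟨treeOf_connected hf, ?_⟩
  rw [treeOf_edgeSet hf, Nat.card_range_of_injective (parentEdge_inj hf)]
  simp

lemma exists_treeOf {n : ℕ} {T : SimpleGraph (Fin (n+1))} (hT : T.IsTree) :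
    ∃ f : Fin n → Fin (n+1), GoodF f ∧ treeOf f = T := by
  classical
  have step : ∀ v, v ≠ 0 → ∃ w, T.Adj v w ∧ T.dist w 0 < T.dist v 0 := by
    intro v hv
    obtain ⟨p, hp⟩ := hT.connected.exists_walk_length_eq_dist v 0
    cases p with
    | nil => exact absurd rfl hv
    | cons h q =>
      refine ⟨_, h, ?_⟩
      have := SimpleGraph.dist_le q
      rw [SimpleGraph.Walk.length_cons] at hp
      omega
  choose f hf using fun i : Fin n => step i.succ (Fin.succ_ne_zero i)
  have hg : GoodF f := by
    apply GoodF.of_depth (fun v => T.dist v 0)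
    intro v hv
    obtain ⟨i, rfl⟩ := Fin.exists_succ_eq.mpr hv
    exact (hf i).2
  refine ⟨f, hg, ?_⟩
  have sub : (treeOf f).edgeSet ⊆ T.edgeSet := by
    rw [treeOf_edgeSet hg]
    rintro _ ⟨i, rfl⟩
    exact (hf i).1
  have c1 := (SimpleGraph.isTree_iff_connected_and_card.mp hT).2
  have c2 := (SimpleGraph.isTree_iff_connected_and_card.mp (treeOf_isTree hg)).2
  rw [← SimpleGraph.edgeSet_inj]
  apply Set.eq_of_subset_of_ncard_le sub
  · rw [← Nat.card_coe_set_eq, ← Nat.card_coe_set_eq]; omega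

lemma treeOf_prod {n : ℕ} {f : Fin n → Fin (n+1)} (hf : GoodF f)
    (Q : Matrix (Fin (n+1)) (Fin (n+1)) ℝ) (hQ : Q.IsSymm) [DecidableRel (treeOf f).Adj] :
    ∏ p ∈ univ.filter (fun p : Fin (n+1) × Fin (n+1) => p.1 < p.2 ∧ (treeOf f).Adj p.1 p.2), Q p.1 p.2
      = ∏ i : Fin n, Q i.succ (f i) := by
  symm
  have hne : ∀ i : Fin n, i.succ ≠ f i := fun i => (hf.ne (Fin.succ_ne_zero i)).symm
  have hs : ∀ i : Fin n, s(min i.succ (f i), max i.succ (f i)) = s(i.succ, f i) := by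
    intro i
    rcases le_total i.succ (f i) with h | h
    · rw [min_eq_left h, max_eq_right h]
    · rw [min_eq_right h, max_eq_left h, Sym2.eq_swap]
  apply Finset.prod_bij (fun i _ => (min i.succ (f i), max i.succ (f i)))
  · intro i _
    simp only [mem_filter, mem_univ, true_and]
    refine ⟨min_lt_max.mpr (hne i), ?_⟩
    rw [← SimpleGraph.mem_edgeSet, hs, treeOf_edgeSet hf]
    exact ⟨i, rfl⟩
  · intro i _ j _ hij
    apply parentEdge_inj hf
    simp only [Prod.mk.injEq] at hij
    simp only
    rw [← hs i, ← hs j, hij.1, hij.2]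
  · rintro ⟨a, b⟩ hab
    simp only [mem_filter, mem_univ, true_and] at hab
    obtain ⟨hlt, hadj⟩ := hab
    rw [← SimpleGraph.mem_edgeSet, treeOf_edgeSet hf] at hadj
    obtain ⟨i, hi⟩ := hadj
    refine ⟨i, mem_univ _, ?_⟩
    simp only [Sym2.eq_iff] at hi
    rcases hi with ⟨h1, h2⟩ | ⟨h1, h2⟩
    · rw [h1, h2, min_eq_left hlt.le, max_eq_right hlt.le]
    · rw [h1, h2, min_eq_right hlt.le, max_eq_left hlt.le]
  · intro i _
    rcases le_total i.succ (f i) with h | h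
    · simp only [min_eq_left h, max_eq_right h]
    · simp only [min_eq_right h, max_eq_left h]
      exact hQ.apply _ _

/-- reduced Laplacian -/
noncomputable def redL {n : ℕ} (Q : Matrix (Fin (n+1)) (Fin (n+1)) ℝ) : Matrix (Fin n) (Fin n) ℝ :=
  Matrix.of fun i j => thetaOf Q i.succ j.succ

lemma theta_eq {d : ℕ} {Q : Matrix (Fin d) (Fin d) ℝ} (h0 : ∀ i, Q i i = 0) (i j : Fin d) :
    thetaOf Q i j = (if i = j then ∑ l, Q i l else 0) - Q i j := by
  simp only [thetaOf, of_apply]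
  split_ifs with h
  · subst h
    rw [h0, sub_zero, Finset.sum_filter]
    apply Finset.sum_congr rfl
    intro l _
    split_ifs with hl
    · rfl
    · rw [not_not.mp hl, h0]
  · ring

lemma redL_det {n : ℕ} {Q : Matrix (Fin (n+1)) (Fin (n+1)) ℝ} (h0 : ∀ i, Q i i = 0) :
    (redL Q).det = ∑ f : Fin n → Fin (n+1), (∏ i, Q i.succ (f i)) * (incM f).det := by
  have hrow : redL Q = fun i => ∑ l : Fin (n+1), Q i.succ l •
      (fun j : Fin n => (if i = j then (1:ℝ) else 0) - (if l = j.succ then 1 else 0)) := by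
    ext i j
    simp only [redL, of_apply, theta_eq h0, Finset.sum_apply, Pi.smul_apply, smul_eq_mul, mul_sub,
      Finset.sum_sub_distrib, Fin.succ_inj]
    congr 1
    · split_ifs <;> simp
    · simp
  have h1 : (redL Q).det = (Matrix.detRowAlternating (R := ℝ) (n := Fin n)).toMultilinearMap (redL Q) := rfl
  rw [h1, hrow, MultilinearMap.map_sum]
  apply Finset.sum_congr rfl
  intro f _
  rw [MultilinearMap.map_smul_univ, smul_eq_mul]
  rfl

theorem matrix_tree {n : ℕ} {Q : Matrix (Fin (n+1)) (Fin (n+1)) ℝ} (hs : Q.IsSymm)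
    (h0 : ∀ i, Q i i = 0) : tau Q = (redL Q).det := by
  classical
  rw [redL_det h0]
  have : ∀ f : Fin n → Fin (n+1), (∏ i, Q i.succ (f i)) * (incM f).det =
      if GoodF f then ∏ i, Q i.succ (f i) else 0 := by
    intro f
    split_ifs with h
    · rw [det_incM_good h, mul_one]
    · rw [det_incM_bad h, mul_zero]
  simp only [this]
  rw [← Finset.sum_filter]
  symm
  unfold tau
  apply Finset.sum_bij (fun f _ => treeOf f)
  · intro f hf
    simp only [mem_filter, mem_univ, true_and] at hf ⊢
    exact treeOf_isTree hf
  · intro f hf g _ h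
    simp only [mem_filter, mem_univ, true_and] at hf
    exact treeOf_injective hf h
  · intro T hT
    simp only [mem_filter, mem_univ, true_and] at hT
    obtain ⟨f, hf, h⟩ := exists_treeOf hT
    exact ⟨f, by simpa using hf, h⟩
  · intro f hf
    simp only [mem_filter, mem_univ, true_and] at hf
    rw [← treeOf_prod hf Q hs]

open scoped MatrixOrder in
lemma exists_factor {n : ℕ} {K : Matrix (Fin n) (Fin n) ℝ} (hK : K.PosDef) :
    ∃ C : Matrix (Fin n) (Fin n) ℝ, K = Cᴴ * C := by
  have h : 0 ≤ K := Matrix.nonneg_iff_posSemidef.mpr hK.posSemidef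
  obtain ⟨C, hC⟩ := CStarAlgebra.nonneg_iff_eq_star_mul_self.mp h
  exact ⟨C, hC⟩

lemma log_det_le {n : ℕ} {M : Matrix (Fin n) (Fin n) ℝ} (hM : M.PosDef) :
    Real.log M.det ≤ M.trace - n ∧ (Real.log M.det = M.trace - n → M = 1) := by
  have hd : M.det = ∏ i, hM.1.eigenvalues i := by simpa using hM.1.det_eq_prod_eigenvalues
  have ht : M.trace = ∑ i, hM.1.eigenvalues i := by simpa using hM.1.trace_eq_sum_eigenvalues
  have hpos := hM.eigenvalues_pos
  have hlog : Real.log M.det = ∑ i, Real.log (hM.1.eigenvalues i) := by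
    rw [hd, Real.log_prod (fun i _ => (hpos i).ne')]
  have htr : M.trace - n = ∑ i, (hM.1.eigenvalues i - 1) := by
    rw [ht]; simp
  have hle : ∀ i ∈ (univ : Finset (Fin n)), Real.log (hM.1.eigenvalues i) ≤ hM.1.eigenvalues i - 1 :=
    fun i _ => Real.log_le_sub_one_of_pos (hpos i)
  rw [hlog, htr]
  refine ⟨Finset.sum_le_sum hle, fun h => ?_⟩
  rw [Finset.sum_eq_sum_iff_of_le hle] at h
  have h1 : ∀ i, hM.1.eigenvalues i = 1 := by
    intro i
    by_contra hne
    exact (Real.log_lt_sub_one_of_pos (hpos i) hne).ne (h i (mem_univ i))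
  have h2 := hM.1.spectral_theorem
  have h3 : (RCLike.ofReal ∘ hM.1.eigenvalues : Fin n → ℝ) = fun _ => 1 := by
    ext i; simp [h1]
  rw [h3] at h2
  rw [h2]
  simp

lemma log_det_le' {n : ℕ} {A B K : Matrix (Fin n) (Fin n) ℝ} (hA : A.PosDef) (hB : B.PosDef)
    (hK : B * K = 1) :
    Real.log A.det - Real.log B.det ≤ (K * A).trace - n ∧
      (Real.log A.det - Real.log B.det = (K * A).trace - n → A = B) := by
  have hKe : B⁻¹ = K := Matrix.inv_eq_right_inv hK
  have hKP : K.PosDef := hKe ▸ hB.inv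
  obtain ⟨C, hC⟩ := exists_factor hKP
  have hdK : 0 < K.det := hKP.det_pos
  have hdC : IsUnit C.det := by
    rw [isUnit_iff_ne_zero]
    intro h
    rw [hC, det_mul, h, mul_zero] at hdK
    exact lt_irrefl _ hdK
  have hCu : IsUnit C := (Matrix.isUnit_iff_isUnit_det _).mpr hdC
  have hM : (C * A * Cᴴ).PosDef :=
    hA.mul_mul_conjTranspose_same (Matrix.vecMul_injective_of_isUnit hCu)
  have ht : (C * A * Cᴴ).trace = (K * A).trace := by
    rw [Matrix.trace_mul_comm, hC, Matrix.mul_assoc]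
  have hBK : B.det * K.det = 1 := by rw [← det_mul, hK, det_one]
  have hdet : (C * A * Cᴴ).det = A.det * K.det := by
    rw [hC]; simp only [det_mul]; ring
  have hlB : Real.log B.det + Real.log K.det = 0 := by
    rw [← Real.log_mul hB.det_pos.ne' hdK.ne', hBK, Real.log_one]
  have hl : Real.log (C * A * Cᴴ).det = Real.log A.det - Real.log B.det := by
    rw [hdet, Real.log_mul hA.det_pos.ne' hdK.ne']; linarith
  have := log_det_le hM
  rw [hl, ht] at this
  refine ⟨this.1, fun h => ?_⟩
  have h1 := this.2 h
  have h2 : A * Cᴴ * C = 1 := by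
    rw [Matrix.mul_assoc] at h1
    exact mul_eq_one_comm.mp h1
  rw [Matrix.mul_assoc, ← hC] at h2
  have h3 : K * B = 1 := mul_eq_one_comm.mp hK
  calc A = A * (K * B) := by rw [h3, mul_one]
    _ = B := by rw [← Matrix.mul_assoc, h2, one_mul]

lemma theta_row {d : ℕ} {Q : Matrix (Fin d) (Fin d) ℝ} (h0 : ∀ i, Q i i = 0) (i : Fin d) :
    ∑ j, thetaOf Q i j = 0 := by
  simp [theta_eq h0]

lemma theta_symm {d : ℕ} {Q : Matrix (Fin d) (Fin d) ℝ} (hs : Q.IsSymm) (h0 : ∀ i, Q i i = 0)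
    (i j : Fin d) : thetaOf Q i j = thetaOf Q j i := by
  rw [theta_eq h0, theta_eq h0, hs.apply]
  by_cases h : i = j
  · subst h; rfl
  · simp [h, Ne.symm h]

lemma theta_col {d : ℕ} {Q : Matrix (Fin d) (Fin d) ℝ} (hs : Q.IsSymm) (h0 : ∀ i, Q i i = 0)
    (j : Fin d) : ∑ i, thetaOf Q i j = 0 := by
  rw [← theta_row h0 j]
  exact Finset.sum_congr rfl fun i _ => theta_symm hs h0 i j

lemma redL_posDef {n : ℕ} {Q : Matrix (Fin (n+1)) (Fin (n+1)) ℝ} (hQ : memQ Q) :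
    (redL Q).PosDef := by
  obtain ⟨hs, h0, hp⟩ := hQ
  apply PosDef.of_dotProduct_mulVec_pos
  · ext i j
    simp only [conjTranspose_apply, redL, of_apply, star_trivial]
    exact theta_symm hs h0 _ _
  · intro x hx
    let z : Fin (n+1) → ℝ := Fin.cases 0 x
    let c : ℝ := (∑ i, z i) / (n+1)
    have hy := hp (fun i => z i - c) (by
      intro h
      have hc : c = 0 := by have := congrFun h 0; simp [z] at this; exact this
      apply hx
      ext i
      have := congrFun h i.succ
      simpa [hc, z] using this) (by
      simp only [Finset.sum_sub_distrib, sum_const, card_univ, Fintype.card_fin, nsmul_eq_mul, c]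
      push_cast
      field_simp
      ring)
    have e1 : (thetaOf Q).mulVec (fun i => z i - c) = (thetaOf Q).mulVec z := by
      ext i
      simp only [mulVec, dotProduct, mul_sub, Finset.sum_sub_distrib, ← Finset.sum_mul,
        theta_row h0, zero_mul, sub_zero]
    have e2 : ∑ i, (thetaOf Q).mulVec z i = 0 := by
      simp only [mulVec, dotProduct]
      rw [Finset.sum_comm]
      simp only [← Finset.sum_mul, theta_col hs h0, zero_mul, Finset.sum_const_zero]
    rw [e1] at hy
    simp only [dotProduct, sub_mul, Finset.sum_sub_distrib, ← Finset.mul_sum, e2, mul_zero,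
      sub_zero] at hy
    rw [Fin.sum_univ_succ] at hy
    simp only [mulVec, dotProduct, Fin.sum_univ_succ, z, Fin.cases_zero, Fin.cases_succ, zero_mul, mul_zero, zero_add] at hy
    simpa [dotProduct, mulVec, redL] using hy

/-- inverse of the reduced Laplacian -/
noncomputable def redK {n : ℕ} (S : Matrix (Fin (n+1)) (Fin (n+1)) ℝ) : Matrix (Fin n) (Fin n) ℝ :=
  Matrix.of fun i j => S i.succ j.succ - S i.succ 0 - S 0 j.succ + S 0 0

lemma redL_mul_redK {n : ℕ} {Q S : Matrix (Fin (n+1)) (Fin (n+1)) ℝ} (h0 : ∀ i, Q i i = 0)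
    (hS : isSigmaOf Q S) : redL Q * redK S = 1 := by
  ext i j
  have h1 : (redL Q * redK S) i j = ∑ k, thetaOf Q i.succ k * (S k j.succ - S k 0 - S 0 j.succ + S 0 0) := by
    rw [Fin.sum_univ_succ, Matrix.mul_apply]
    simp [redL, redK]
  have h2 : ∀ v, ∑ k, thetaOf Q i.succ k * S k v = Pmat (n+1) i.succ v := by
    intro v; rw [← hS.2.2, Matrix.mul_apply]
  rw [h1]
  simp only [mul_add, mul_sub, Finset.sum_add_distrib, Finset.sum_sub_distrib, ← Finset.sum_mul,
    theta_row h0, h2]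
  simp [Pmat, Matrix.one_apply, Fin.succ_ne_zero]

lemma sum_lt {d : ℕ} (F : Fin d → Fin d → ℝ) (hs : ∀ i j, F i j = F j i) (h0 : ∀ i, F i i = 0) :
    ∑ i, ∑ j, F i j = 2 * ∑ p ∈ univ.filter (fun p : Fin d × Fin d => p.1 < p.2), F p.1 p.2 := by
  have e : ∀ i j, F i j = (if i < j then F i j else 0) + (if j < i then F j i else 0) := by
    intro i j
    rcases lt_trichotomy i j with h | h | h
    · simp [h, h.not_gt]
    · subst h; simp [h0]
    · simp [h, h.not_gt, hs i j]
  rw [Finset.sum_filter, Fintype.sum_prod_type]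
  calc ∑ i, ∑ j, F i j = ∑ i, ∑ j, ((if i < j then F i j else 0) + (if j < i then F j i else 0)) :=
        Finset.sum_congr rfl fun i _ => Finset.sum_congr rfl fun j _ => e i j
    _ = _ := by
      simp only [Finset.sum_add_distrib]
      rw [two_mul]
      congr 1
      rw [Finset.sum_comm]

lemma sinner_gamma {n : ℕ} {Q S : Matrix (Fin (n+1)) (Fin (n+1)) ℝ} (hs : Q.IsSymm)
    (h0 : ∀ i, Q i i = 0) (hS : S.IsSymm) : sinner (gammaOf S) Q = (redK S * redL Q).trace := by
  have h1 := sum_lt (fun i j => gammaOf S i j * Q i j)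
    (by intro i j; simp only [gammaOf, of_apply, hs.apply i j, hS.apply i j]; ring)
    (by intro i; simp [h0])
  have h2 : ∑ i, ∑ j, gammaOf S i j * Q i j = 2 * ∑ i, ∑ j, S i j * thetaOf Q i j := by
    have a : ∑ i, ∑ j, S i j * thetaOf Q i j = ∑ i, ∑ j, Q i j * S i i - ∑ i, ∑ j, Q i j * S i j := by
      rw [← Finset.sum_sub_distrib]
      apply Finset.sum_congr rfl
      intro i _
      simp only [theta_eq h0, mul_sub, Finset.sum_sub_distrib, mul_ite, mul_zero,
        Finset.sum_ite_eq, mem_univ, if_true, ← Finset.sum_mul]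
      congr 1
      · ring
      · exact Finset.sum_congr rfl fun j _ => mul_comm _ _
    have b : ∑ i, ∑ j, Q i j * S j j = ∑ i, ∑ j, Q i j * S i i := by
      rw [Finset.sum_comm]
      exact Finset.sum_congr rfl fun i _ => Finset.sum_congr rfl fun j _ => by rw [hs.apply]
    have c : ∑ i, ∑ j, gammaOf S i j * Q i j =
        ∑ i, ∑ j, Q i j * S i i + ∑ i, ∑ j, Q i j * S j j - 2 * ∑ i, ∑ j, Q i j * S i j := by
      simp only [Finset.mul_sum, ← Finset.sum_add_distrib, ← Finset.sum_sub_distrib]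
      refine Finset.sum_congr rfl fun i _ => Finset.sum_congr rfl fun j _ => ?_
      simp only [gammaOf, of_apply]; ring
    rw [c, b, a]; ring
  have h3 : (redK S * redL Q).trace =
      ∑ i, ∑ j, (S i j - S i 0 - S 0 j + S 0 0) * thetaOf Q i j := by
    have z1 : ∀ v, S 0 v - S 0 0 - S 0 v + S 0 0 = 0 := fun v => by ring
    have z2 : ∀ v, S v 0 - S v 0 - S 0 0 + S 0 0 = 0 := fun v => by ring
    rw [Fin.sum_univ_succ]
    simp only [z1, zero_mul, Finset.sum_const_zero, zero_add]
    simp only [Matrix.trace, Matrix.diag, Matrix.mul_apply, redK, redL, of_apply]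
    refine Finset.sum_congr rfl fun i _ => ?_
    rw [Fin.sum_univ_succ, z2, zero_mul, zero_add]
    exact Finset.sum_congr rfl fun j _ => by rw [theta_symm hs h0]
  have h4 : ∑ i, ∑ j, (S i j - S i 0 - S 0 j + S 0 0) * thetaOf Q i j =
      ∑ i, ∑ j, S i j * thetaOf Q i j := by
    have a : ∑ i, ∑ j, S i 0 * thetaOf Q i j = 0 := by
      simp only [← Finset.mul_sum, theta_row h0, mul_zero, Finset.sum_const_zero]
    have b : ∑ i, ∑ j, S 0 j * thetaOf Q i j = 0 := by
      rw [Finset.sum_comm]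
      simp only [← Finset.mul_sum, theta_col hs h0, mul_zero, Finset.sum_const_zero]
    have c : ∑ i, ∑ j, S 0 0 * thetaOf Q i j = 0 := by
      simp only [← Finset.mul_sum, theta_row h0, mul_zero, Finset.sum_const_zero]
    simp only [add_mul, sub_mul, Finset.sum_add_distrib, Finset.sum_sub_distrib, a, b, c]
    ring
  rw [h3, h4]
  unfold sinner
  linarith

lemma redL_inj {n : ℕ} {Q Q' : Matrix (Fin (n+1)) (Fin (n+1)) ℝ} (hs : Q.IsSymm) (hs' : Q'.IsSymm)
    (h0 : ∀ i, Q i i = 0) (h0' : ∀ i, Q' i i = 0) (h : redL Q = redL Q') : Q = Q' := by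
  have e : ∀ i j : Fin n, thetaOf Q i.succ j.succ = thetaOf Q' i.succ j.succ := fun i j =>
    congrFun (congrFun h i) j
  have e0 : ∀ i : Fin n, thetaOf Q i.succ 0 = thetaOf Q' i.succ 0 := by
    intro i
    have a := theta_row h0 i.succ
    have b := theta_row h0' i.succ
    rw [Fin.sum_univ_succ] at a b
    simp only [e] at a
    linarith
  have k : ∀ i j, i ≠ j → thetaOf Q i j = thetaOf Q' i j → Q i j = Q' i j := by
    intro i j hij h
    simpa [thetaOf, hij] using h
  ext i j
  by_cases hij : i = j
  · subst hij; rw [h0, h0']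
  apply k i j hij
  induction i using Fin.cases with
  | succ i =>
    induction j using Fin.cases with
    | zero => exact e0 i
    | succ j => exact e i j
  | zero =>
    induction j using Fin.cases with
    | zero => exact absurd rfl hij
    | succ j => rw [theta_symm hs h0, theta_symm hs' h0']; exact e0 j

/-- Step (S1): if `Q̂ ∈ 𝒬` vanishes off the edges of `G` and its variogram matches `Γ̄`
on the edges of `G`, then `Q̂` is the unique maximizer of the surrogate log-likelihood
`ℓ(Q; Γ̄) = (1/2) log τ(Q) − (1/2)⟨Γ̄, Q⟩` over `{Q ∈ 𝒬 : Q_{ij} = 0 for ij ∉ ℰ}`. -/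
theorem surrogate_mle_graphical {d : ℕ} (G : SimpleGraph (Fin d))
    (Γbar Qh S : Matrix (Fin d) (Fin d) ℝ)
    (hΓsym : Γbar.IsSymm) (hΓdiag : ∀ i, Γbar i i = 0)
    (hQh : memQ Qh)
    (hQhzero : ∀ i j, i ≠ j → ¬G.Adj i j → Qh i j = 0)
    (hS : isSigmaOf Qh S)
    (hmatch : ∀ i j, G.Adj i j → gammaOf S i j = Γbar i j) :
    (∀ Q, memQ Q → (∀ i j, i ≠ j → ¬G.Adj i j → Q i j = 0) →
        (1 / 2) * Real.log (tau Q) - (1 / 2) * sinner Γbar Q ≤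
          (1 / 2) * Real.log (tau Qh) - (1 / 2) * sinner Γbar Qh) ∧
    (∀ Q, memQ Q → (∀ i j, i ≠ j → ¬G.Adj i j → Q i j = 0) →
        (1 / 2) * Real.log (tau Q) - (1 / 2) * sinner Γbar Q =
          (1 / 2) * Real.log (tau Qh) - (1 / 2) * sinner Γbar Qh → Q = Qh) := by
  rcases d with _ | n
  · refine ⟨fun Q _ _ => ?_, fun Q _ _ _ => Subsingleton.elim _ _⟩
    rw [Subsingleton.elim Q Qh]
  have hin : ∀ Q, memQ Q → (∀ i j, i ≠ j → ¬G.Adj i j → Q i j = 0) →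
      sinner Γbar Q = (redK S * redL Q).trace := by
    intro Q hQ hz
    rw [← sinner_gamma hQ.1 hQ.2.1 hS.1]
    unfold sinner
    refine Finset.sum_congr rfl fun p hp => ?_
    have hlt : p.1 < p.2 := (Finset.mem_filter.mp hp).2
    by_cases ha : G.Adj p.1 p.2
    · rw [hmatch _ _ ha]
    · rw [hz _ _ hlt.ne ha, mul_zero, mul_zero]
  have hinv := redL_mul_redK hQh.2.1 hS
  have hh : sinner Γbar Qh = n := by
    rw [hin Qh hQh hQhzero, mul_eq_one_comm.mp hinv]; simp
  have main : ∀ Q, memQ Q → (∀ i j, i ≠ j → ¬G.Adj i j → Q i j = 0) →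
      Real.log (tau Q) - Real.log (tau Qh) ≤ sinner Γbar Q - sinner Γbar Qh ∧
      (Real.log (tau Q) - Real.log (tau Qh) = sinner Γbar Q - sinner Γbar Qh → Q = Qh) := by
    intro Q hQ hz
    have := log_det_le' (redL_posDef hQ) (redL_posDef hQh) hinv
    rw [matrix_tree hQ.1 hQ.2.1, matrix_tree hQh.1 hQh.2.1, hh, hin Q hQ hz]
    exact ⟨this.1, fun h => redL_inj hQ.1 hQh.1 hQ.2.1 hQh.2.1 (this.2 h)⟩
  refine ⟨fun Q hQ hz => ?_, fun Q hQ hz h => ?_⟩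
  · have := (main Q hQ hz).1
    linarith
  · exact (main Q hQ hz).2 (by linarith)
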